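/- arXiv:2511.04250 — 6 statements merged into one kernel-verified Lean document; each statement's English description precedes it below -/
import Mathlib

section
/- For every real number δ with 0 < δ < 1 there exists N ∈ ℕ such that for all n ≥ N there is an invertible matrix M over 𝔽₂ of size 2n × 2n with the property that every n × n submatrix of M (obtained by selecting n rows and n columns via injective index maps r, c : Fin n → Fin (2n)) has rank at least (1 − δ)·n over 𝔽₂. -/
open Finset in
lemma aux_restrict {ι κ F : Type*} [Fintype ι] [Fintype κ] [Fintype F] [DecidableEq ι] [DecidableEq κ]
    [DecidableEq F]
    (e : κ → ι) (he : Function.Injective e) (P : (κ → F) → Prop) :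
    Nat.card {f : ι → F // P (f ∘ e)} * Nat.card F ^ Fintype.card κ ≤
      Nat.card {g : κ → F // P g} * Nat.card F ^ Fintype.card ι := by
  classical
  let Φ : {f : ι → F // P (f ∘ e)} → {g : κ → F // P g} × ({i : ι // i ∉ Set.range e} → F) :=
    fun f => (⟨f.1 ∘ e, f.2⟩, fun i => f.1 i.1)
  have hΦ : Function.Injective Φ := by
    rintro ⟨f, hf⟩ ⟨g, hg⟩ h
    simp only [Φ, Prod.mk.injEq, Subtype.mk.injEq] at h
    ext i
    by_cases hi : i ∈ Set.range e
    · obtain ⟨k, rfl⟩ := hi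
      exact congrFun h.1 k
    · exact congrFun h.2 ⟨i, hi⟩
  have h1 := Nat.card_le_card_of_injective Φ hΦ
  have h2 : Fintype.card {i : ι // i ∉ Set.range e} + Fintype.card κ = Fintype.card ι := by
    have := Fintype.card_subtype_compl (fun i => i ∈ Set.range e)
    have h3 : Fintype.card {i // i ∈ Set.range e} = Fintype.card κ :=
      Set.card_range_of_injective he
    have h4 := Fintype.card_subtype_le (fun i => i ∈ Set.range e)
    omega
  rw [Nat.card_prod, Nat.card_fun, Nat.card_eq_fintype_card (α := {i : ι // i ∉ Set.range e})] at h1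
  rw [← h2, pow_add, ← mul_assoc]
  exact Nat.mul_le_mul_right _ h1

lemma aux_rank (n d : ℕ) :
    Nat.card {A : Matrix (Fin n) (Fin n) (ZMod 2) // A.rank + d ≤ n} * 2 ^ (d * d) ≤
      2 ^ (n + n * n) := by
  classical
  let Φ : (S : Finset (Fin n)) → ((S → Fin n → ZMod 2) × ({j // j ∉ S} → S → ZMod 2)) →
      Matrix (Fin n) (Fin n) (ZMod 2) := fun S x i j =>
    if h : j ∈ S then x.1 ⟨j, h⟩ i else ∑ s, x.2 ⟨j, h⟩ s * x.1 s i
  let T : Finset (Finset (Fin n)) := Finset.univ.filter (fun S => S.card + d ≤ n)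
  have hsub : (Finset.univ.filter (fun A : Matrix (Fin n) (Fin n) (ZMod 2) => A.rank + d ≤ n)) ⊆
      T.biUnion (fun S => Finset.univ.image (Φ S)) := by
    intro A hA
    simp only [Finset.mem_filter, Finset.mem_univ, true_and] at hA
    obtain ⟨κ, a, ha, hspan, hli⟩ := exists_linearIndependent' (ZMod 2) A.col
    have : Finite κ := Finite.of_injective a ha
    have : Fintype κ := Fintype.ofFinite κ
    let S : Finset (Fin n) := Finset.univ.image a
    have hS : S.card = A.rank := by
      rw [Finset.card_image_of_injective _ ha, Matrix.rank_eq_finrank_span_cols, ← hspan,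
        finrank_span_eq_card hli, Finset.card_univ]
    have hset : Set.range (A.col ∘ a) = Set.range (fun s : S => A.col s) := by
      ext v
      simp [S]
    have hmem : ∀ j, ∃ c : S → ZMod 2, ∑ s, c s • A.col s = A.col j := by
      intro j
      have : A.col j ∈ Submodule.span (ZMod 2) (Set.range (fun s : S => A.col s)) := by
        rw [← hset, hspan]
        exact Submodule.subset_span ⟨j, rfl⟩
      exact (Submodule.mem_span_range_iff_exists_fun _).1 this
    choose c hc using hmem
    simp only [Finset.mem_biUnion, T, Finset.mem_filter, Finset.mem_univ, true_and,
      Finset.mem_image]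
    refine ⟨S, by omega, ⟨fun s i => A i s, fun j s => c j s⟩, ?_⟩
    ext i j
    simp only [Φ]
    split_ifs with h
    · rfl
    · have := congrFun (hc j) i
      simpa [Finset.sum_apply] using this
  have hcard : ∀ S ∈ T, (Finset.univ.image (Φ S)).card * 2 ^ (d * d) ≤ 2 ^ (n * n) := by
    intro S hS
    simp only [T, Finset.mem_filter, Finset.mem_univ, true_and] at hS
    have h1 : (Finset.univ.image (Φ S)).card ≤ 2 ^ (n * S.card) * 2 ^ (S.card * (n - S.card)) := by
      refine Finset.card_image_le.trans (le_of_eq ?_)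
      rw [Finset.card_univ, Fintype.card_prod]
      simp [pow_mul, Fintype.card_subtype_compl]
    refine (Nat.mul_le_mul_right _ h1).trans ?_
    rw [← pow_add, ← pow_add]
    apply Nat.pow_le_pow_right (by norm_num)
    obtain ⟨e, he⟩ : ∃ e, n = S.card + e := ⟨n - S.card, by omega⟩
    have hde : d ≤ e := by omega
    generalize S.card = s at *
    subst he
    rw [Nat.add_sub_cancel_left]
    nlinarith [Nat.mul_le_mul hde hde]
  have h0 : Nat.card {A : Matrix (Fin n) (Fin n) (ZMod 2) // A.rank + d ≤ n} =
      (Finset.univ.filter (fun A : Matrix (Fin n) (Fin n) (ZMod 2) => A.rank + d ≤ n)).card := by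
    rw [Nat.card_eq_fintype_card, Fintype.card_subtype]
  rw [h0]
  calc _ ≤ (∑ S ∈ T, (Finset.univ.image (Φ S)).card) * 2 ^ (d * d) :=
        Nat.mul_le_mul_right _ ((Finset.card_le_card hsub).trans Finset.card_biUnion_le)
    _ = ∑ S ∈ T, (Finset.univ.image (Φ S)).card * 2 ^ (d * d) := Finset.sum_mul _ _ _
    _ ≤ ∑ S ∈ T, 2 ^ (n * n) := Finset.sum_le_sum hcard
    _ = T.card * 2 ^ (n * n) := by simp
    _ ≤ 2 ^ n * 2 ^ (n * n) := by
        refine Nat.mul_le_mul_right _ ?_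
        refine (Finset.card_le_univ _).trans (by simp)
    _ = _ := by rw [pow_add]

lemma aux_bad (n m d : ℕ) (r c : Fin n → Fin m) (hr : Function.Injective r)
    (hc : Function.Injective c) :
    Nat.card {M : Matrix (Fin m) (Fin m) (ZMod 2) // (M.submatrix r c).rank + d ≤ n}
      * 2 ^ (d * d) ≤ 2 ^ (n + m * m) := by
  have h := aux_restrict (F := ZMod 2) (Prod.map r c) (hr.prodMap hc)
    (fun g => (Matrix.of (fun i j => g (i, j))).rank + d ≤ n)
  have e1 : Nat.card {f : Fin m × Fin m → ZMod 2 //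
      (Matrix.of (fun i j => (f ∘ Prod.map r c) (i, j))).rank + d ≤ n} =
      Nat.card {M : Matrix (Fin m) (Fin m) (ZMod 2) // (M.submatrix r c).rank + d ≤ n} :=
    Nat.card_congr ((Equiv.curry _ _ _).subtypeEquiv (fun f => Iff.rfl))
  have e2 : Nat.card {f : Fin n × Fin n → ZMod 2 //
      (Matrix.of (fun i j => f (i, j))).rank + d ≤ n} =
      Nat.card {M : Matrix (Fin n) (Fin n) (ZMod 2) // M.rank + d ≤ n} :=
    Nat.card_congr ((Equiv.curry _ _ _).subtypeEquiv (fun f => Iff.rfl))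
  rw [e1, e2] at h
  have h2 := aux_rank n d
  simp only [Nat.card_eq_fintype_card, ZMod.card, Fintype.card_prod, Fintype.card_fin] at h h2 ⊢
  rw [pow_add] at h2 ⊢
  have hpos : 0 < 2 ^ (n * n) := by positivity
  refine Nat.le_of_mul_le_mul_right ?_ hpos
  calc _ = (_ * 2 ^ (n * n)) * 2 ^ (d * d) := by ring
    _ ≤ _ := Nat.mul_le_mul_right _ h
    _ = (_ * 2 ^ (d * d)) * 2 ^ (m * m) := by ring
    _ ≤ _ := Nat.mul_le_mul_right _ h2
    _ = _ := by ring

lemma aux_GL (m : ℕ) :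
    2 ^ (m * m) ≤ Nat.card {M : Matrix (Fin m) (Fin m) (ZMod 2) // IsUnit M} * 2 ^ m := by
  have h1 : Nat.card (GL (Fin m) (ZMod 2)) ≤
      Nat.card {M : Matrix (Fin m) (Fin m) (ZMod 2) // IsUnit M} :=
    Nat.card_le_card_of_injective (fun g => ⟨g.1, g.isUnit⟩)
      (fun a b h => Units.ext (by simpa using h))
  refine le_trans ?_ (Nat.mul_le_mul_right _ h1)
  rw [Matrix.card_GL_field]
  have : (2:ℕ) ^ m = ∏ i : Fin m, 2 := by simp
  simp only [ZMod.card]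
  nth_rewrite 2 [this]
  rw [← Finset.prod_mul_distrib]
  calc 2 ^ (m * m) = ∏ i : Fin m, 2 ^ m := by simp [pow_mul]
    _ ≤ _ := by
      apply Finset.prod_le_prod' 
      intro i _
      obtain ⟨k, hk⟩ : ∃ k, m = i.1 + k + 1 := ⟨m - i.1 - 1, by omega⟩
      have h3 : 2 ^ i.1 ≤ 2 ^ (i.1 + k) := Nat.pow_le_pow_right (by norm_num) (by omega)
      have h4 : 2 ^ m = 2 * 2 ^ (i.1 + k) := by
        conv_lhs => rw [hk]
        rw [pow_succ]; ring
      omega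

lemma aux_main (n d : ℕ)
    (H : ∀ M : Matrix (Fin (2 * n)) (Fin (2 * n)) (ZMod 2), IsUnit M →
      ∃ r c : Fin n → Fin (2 * n), Function.Injective r ∧ Function.Injective c ∧
        (M.submatrix r c).rank + d ≤ n) : 2 ^ (d * d) ≤ (32 * n ^ 2) ^ n := by
  classical
  have hG := aux_GL (2 * n)
  have hB := fun r c hr hc => aux_bad n (2 * n) d r c hr hc
  simp only [Nat.card_eq_fintype_card, Fintype.card_subtype] at hG hB
  let T : Finset ((Fin n → Fin (2 * n)) × (Fin n → Fin (2 * n))) :=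
    Finset.univ.filter (fun p => Function.Injective p.1 ∧ Function.Injective p.2)
  let B : ((Fin n → Fin (2 * n)) × (Fin n → Fin (2 * n))) →
      Finset (Matrix (Fin (2 * n)) (Fin (2 * n)) (ZMod 2)) := fun p =>
    Finset.univ.filter (fun M => (M.submatrix p.1 p.2).rank + d ≤ n)
  have hsub : (Finset.univ.filter
      (fun M : Matrix (Fin (2 * n)) (Fin (2 * n)) (ZMod 2) => IsUnit M)) ⊆ T.biUnion B := by
    intro M hM
    obtain ⟨r, c, hr, hc, h⟩ := H M (by simpa using hM)
    simp only [Finset.mem_biUnion, T, B, Finset.mem_filter, Finset.mem_univ, true_and]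
    exact ⟨(r, c), ⟨hr, hc⟩, h⟩
  have h1 := (Finset.card_le_card hsub).trans Finset.card_biUnion_le
  have h2 : (∑ p ∈ T, (B p).card) * 2 ^ (d * d) ≤
      ((2 * n) ^ n * (2 * n) ^ n) * 2 ^ (n + 2 * n * (2 * n)) := by
    rw [Finset.sum_mul]
    calc _ ≤ ∑ p ∈ T, 2 ^ (n + 2 * n * (2 * n)) := by
          apply Finset.sum_le_sum
          intro p hp
          simp only [T, Finset.mem_filter, Finset.mem_univ, true_and] at hp
          exact hB p.1 p.2 hp.1 hp.2
      _ = T.card * 2 ^ (n + 2 * n * (2 * n)) := by simp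
      _ ≤ _ := by
          refine Nat.mul_le_mul_right _ ((Finset.card_le_univ _).trans (by simp))
  have hpos : 0 < 2 ^ (2 * n * (2 * n)) := by positivity
  refine Nat.le_of_mul_le_mul_right ?_ hpos
  have h3 := Nat.mul_le_mul_right (2 ^ (d * d)) (hG.trans (Nat.mul_le_mul_right _ h1))
  calc _ = 2 ^ (2 * n * (2 * n)) * 2 ^ (d * d) := by ring
    _ ≤ _ := h3
    _ = ((∑ p ∈ T, (B p).card) * 2 ^ (d * d)) * 2 ^ (2 * n) := by ring
    _ ≤ _ := Nat.mul_le_mul_right _ h2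
    _ = ((2 * n) * (2 * n) * 2 * 2 ^ 2) ^ n * 2 ^ (2 * n * (2 * n)) := by
        simp only [mul_pow, pow_add, ← pow_mul]; ring
    _ = _ := by congr 2; ring

/-- For every real `δ` with `0 < δ < 1` there exists `N` such that for all `n ≥ N`
there is an invertible `2n × 2n` matrix `M` over `𝔽₂` all of whose `n × n`
submatrices (selected by injective row/column index maps) have rank at least `(1 - δ) * n`. -/
theorem statement0 (δ : ℝ) (hδ0 : 0 < δ) (hδ1 : δ < 1) :
    ∃ N : ℕ, ∀ n : ℕ, N ≤ n →
      ∃ M : Matrix (Fin (2 * n)) (Fin (2 * n)) (ZMod 2),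
        IsUnit M ∧
        ∀ r c : Fin n → Fin (2 * n), Function.Injective r → Function.Injective c →
          (1 - δ) * n ≤ ((M.submatrix r c).rank : ℝ) := by
  set q : ℝ := (2:ℝ) ^ (δ ^ 2) with hq
  have hq1 : 1 < q := Real.one_lt_rpow (by norm_num) (by positivity)
  have hq0 : 0 < q := by linarith
  have ht := tendsto_pow_const_mul_const_pow_of_abs_lt_one 2 (r := q⁻¹)
    (by rw [abs_of_pos (by positivity)]; exact inv_lt_one_of_one_lt₀ hq1)
  have hev := ht.eventually (gt_mem_nhds (show (0:ℝ) < 1 / 32 by norm_num))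
  obtain ⟨N, hN⟩ := Filter.eventually_atTop.1 hev
  refine ⟨N + 1, fun n hn => ?_⟩
  have hlt : 32 * (n:ℝ) ^ 2 < q ^ n := by
    have h := hN n (by omega)
    rw [inv_pow, ← div_eq_mul_inv, div_lt_iff₀ (by positivity)] at h
    linarith
  by_contra! hcon
  have key := aux_main n ⌈δ * n⌉₊ (by
    intro M hM
    obtain ⟨r, c, hr, hc, h⟩ := hcon M hM
    refine ⟨r, c, hr, hc, ?_⟩
    have hle : (M.submatrix r c).rank ≤ n := by
      simpa using (M.submatrix r c).rank_le_card_width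
    have : ⌈δ * n⌉₊ ≤ n - (M.submatrix r c).rank := by
      apply Nat.ceil_le.2
      rw [Nat.cast_sub hle]
      linarith
    omega)
  set d := ⌈δ * n⌉₊
  have hd : δ * n ≤ d := Nat.le_ceil _
  have key' : (2:ℝ) ^ (d * d) ≤ (32 * (n:ℝ) ^ 2) ^ n := by exact_mod_cast key
  have h5 : (32 * (n:ℝ) ^ 2) ^ n < (q ^ n) ^ n :=
    pow_lt_pow_left₀ hlt (by positivity) (by omega)
  have h6 : (q ^ n) ^ n ≤ (2:ℝ) ^ (d * d) := by
    rw [← pow_mul, hq, ← Real.rpow_natCast, ← Real.rpow_mul (by norm_num), ← Real.rpow_natCast (2:ℝ) (d * d)]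
    apply Real.rpow_le_rpow_of_exponent_le (by norm_num)
    push_cast
    have : (0:ℝ) ≤ δ * n := by positivity
    nlinarith [mul_le_mul hd hd this (this.trans hd)]
  linarith
end

section
/- For every n ∈ ℕ, four times the number of invertible n × n matrices over 𝔽₂ exceeds 2^{n²}; equivalently, a uniformly random n × n matrix over 𝔽₂ is invertible with probability strictly greater than 1/4. -/
theorem aux_prod (n : ℕ) : ∏ i ∈ Finset.range (n+1), (2 ^ (n+1) - 2 ^ i : ℕ)
    = (2 * 2 ^ n - 1) * (2 ^ n * ∏ i ∈ Finset.range n, (2 ^ n - 2 ^ i : ℕ)) := by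
  rw [Finset.prod_range_succ']
  have h : ∀ i ∈ Finset.range n, (2 ^ (n+1) - 2 ^ (i+1) : ℕ) = 2 * (2 ^ n - 2 ^ i) := by
    intro i _
    rw [pow_succ, pow_succ]; omega
  rw [Finset.prod_congr rfl h, Finset.prod_mul_distrib, Finset.prod_const, Finset.card_range,
    pow_zero, pow_succ, mul_comm, mul_comm (2 ^ n) 2]

theorem aux_bound (n : ℕ) (hn : 1 ≤ n) :
    2 ^ (n ^ 2) * (2 ^ n + 2) ≤ 2 ^ n * (4 * ∏ i ∈ Finset.range n, (2 ^ n - 2 ^ i : ℕ)) := by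
  induction n, hn using Nat.le_induction with
  | base => simp
  | succ n hn ih =>
    rw [aux_prod]
    have hx : 2 ≤ 2 ^ n := by
      calc 2 = 2 ^ 1 := rfl
        _ ≤ 2 ^ n := Nat.pow_le_pow_right (by norm_num) hn
    have hq : 2 ^ ((n+1) ^ 2) = 2 ^ (n ^ 2) * (2 ^ n) ^ 2 * 2 := by ring
    rw [hq, pow_succ 2 n]
    generalize 2 ^ (n ^ 2) = Q at *
    generalize ∏ i ∈ Finset.range n, (2 ^ n - 2 ^ i : ℕ) = P at *
    generalize 2 ^ n = x at *
    obtain ⟨y, rfl⟩ := Nat.exists_eq_add_of_le hx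
    have e : 2 * (2 + y) - 1 = 2 * y + 3 := by omega
    rw [e]
    calc Q * (2 + y) ^ 2 * 2 * ((2 + y) * 2 + 2)
        ≤ Q * (2 + y) ^ 2 * 2 * ((2 + y) * 2 + 2) + 2 * Q * (2 + y) * y := Nat.le_add_right _ _
      _ = 2 * (2 + y) * (2 * y + 3) * (Q * (2 + y + 2)) := by ring
      _ ≤ 2 * (2 + y) * (2 * y + 3) * ((2 + y) * (4 * P)) := Nat.mul_le_mul_left _ ih
      _ = _ := by ring

/-- Four times the number of invertible `n × n` matrices over `𝔽₂` exceeds `2 ^ (n²)`: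
a uniformly random matrix over `𝔽₂` is invertible with probability greater than `1/4`. -/
theorem statement1 (n : ℕ) :
    2 ^ (n ^ 2) < 4 * Nat.card (GL (Fin n) (ZMod 2)) := by
  rw [Matrix.card_GL_field, ZMod.card,
    Fin.prod_univ_eq_prod_range (fun i => (2 ^ n - 2 ^ i : ℕ)) n]
  rcases Nat.eq_zero_or_pos n with rfl | hn
  · simp
  · have h := aux_bound n hn
    have hQ : 0 < 2 ^ (n ^ 2) := by positivity
    refine lt_of_mul_lt_mul_left (a := 2 ^ n) ?_ (Nat.zero_le _)
    refine lt_of_lt_of_le ?_ h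
    nlinarith
end

section
/- Let n ≥ 1 and define the real matrix M of size 2^n × 2^n, indexed by x, y ∈ {0, 1, …, 2^n − 1}, by M(x, y) = 2^{−n} · ∏_{i=1}^{n} t_i(x, y), where t_i(x, y) = cos²(π x / 2^{2n−i}) if y_i = 0 and t_i(x, y) = sin²(π x / 2^{2n−i}) if y_i = 1, and where (y_1, …, y_n) ∈ {0,1}^n are the binary digits of y (with y = Σ_{i=1}^n y_i 2^{i−1}). Then the rank of M over ℝ is at least 2^{n−1}. -/
open Polynomial in
theorem span_aux (n : ℕ) : ∀ p : ℝ[X], p.degree < ((2 ^ n : ℕ) : WithBot ℕ) →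
    ∃ v : ℕ → ℝ, ∀ t : ℝ, ∑ y ∈ Finset.range (2 ^ n), (∏ i ∈ Finset.range n,
      (if y.testBit i then (1 - Real.cos (2 ^ i * t)) / 2
        else (1 + Real.cos (2 ^ i * t)) / 2)) * v y = p.eval (Real.cos t) := by
  induction n with
  | zero =>
    intro p hp
    refine ⟨fun _ => p.coeff 0, fun t => ?_⟩
    have : p = C (p.coeff 0) := by
      apply eq_C_of_degree_le_zero
      have h1 : p.degree < (1 : ℕ) := by simpa using hp
      rw [← Nat.WithBot.lt_one_iff_le_zero]
      simpa using h1
    conv_rhs => rw [this]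
    simp
  | succ n ih =>
    intro p hp
    set T : ℝ[X] := Chebyshev.T ℝ ((2 ^ n : ℕ) : ℤ) with hT
    have hTd : T.degree = ((2 ^ n : ℕ) : WithBot ℕ) := by
      rw [hT, Chebyshev.degree_T]; simp
    have hT0 : T ≠ 0 := by
      intro h; rw [h, degree_zero] at hTd; exact WithBot.bot_ne_coe hTd
    have hr : (p % T).degree < ((2 ^ n : ℕ) : WithBot ℕ) := by
      rw [← hTd]; exact EuclideanDomain.mod_lt p hT0
    have hq : (p / T).degree < ((2 ^ n : ℕ) : WithBot ℕ) := by
      by_cases hq0 : p / T = 0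
      · rw [hq0, degree_zero]; exact WithBot.bot_lt_coe _
      by_cases hlt : p.degree < T.degree
      · exact absurd ((Polynomial.div_eq_zero_iff hT0).2 hlt) hq0
      have h := degree_add_div hT0 (not_lt.1 hlt)
      rw [hTd, degree_eq_natDegree hq0] at h
      rw [← h] at hp
      rw [degree_eq_natDegree hq0]
      norm_cast at hp ⊢
      rw [pow_succ] at hp
      omega
    obtain ⟨a, ha⟩ := ih (p % T + p / T) (lt_of_le_of_lt (degree_add_le _ _) (max_lt hr hq))
    obtain ⟨b, hb⟩ := ih (p % T - p / T) (lt_of_le_of_lt (degree_sub_le _ _) (max_lt hr hq))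
    refine ⟨fun y => if y < 2 ^ n then a y else b (y - 2 ^ n), fun t => ?_⟩
    have e : p.eval (Real.cos t) = T.eval (Real.cos t) * (p / T).eval (Real.cos t)
        + (p % T).eval (Real.cos t) := by
      conv_lhs => rw [← EuclideanDomain.div_add_mod p T]
      simp
    have eT : T.eval (Real.cos t) = Real.cos (2 ^ n * t) := by
      rw [hT, Chebyshev.T_real_cos]; simp
    have ha' := ha t
    have hb' := hb t
    rw [eval_add] at ha'
    rw [eval_sub] at hb'
    have s1 : ∀ y ∈ Finset.range (2 ^ n), (∏ i ∈ Finset.range (n+1),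
      (if y.testBit i then (1 - Real.cos (2 ^ i * t)) / 2
        else (1 + Real.cos (2 ^ i * t)) / 2)) * (if y < 2 ^ n then a y else b (y - 2 ^ n))
        = (1 + Real.cos (2 ^ n * t)) / 2 * ((∏ i ∈ Finset.range n,
      (if y.testBit i then (1 - Real.cos (2 ^ i * t)) / 2
        else (1 + Real.cos (2 ^ i * t)) / 2)) * a y) := by
      intro y hy
      have hy := Finset.mem_range.1 hy
      rw [Finset.prod_range_succ, Nat.testBit_lt_two_pow hy, if_pos hy]
      simp only [Bool.false_eq_true, if_false]
      ring
    have s2 : ∀ y ∈ Finset.range (2 ^ n), (∏ i ∈ Finset.range (n+1),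
      (if (2 ^ n + y).testBit i then (1 - Real.cos (2 ^ i * t)) / 2
        else (1 + Real.cos (2 ^ i * t)) / 2)) *
          (if 2 ^ n + y < 2 ^ n then a (2 ^ n + y) else b (2 ^ n + y - 2 ^ n))
        = (1 - Real.cos (2 ^ n * t)) / 2 * ((∏ i ∈ Finset.range n,
      (if y.testBit i then (1 - Real.cos (2 ^ i * t)) / 2
        else (1 + Real.cos (2 ^ i * t)) / 2)) * b y) := by
      intro y hy
      have hy := Finset.mem_range.1 hy
      rw [Finset.prod_range_succ, Nat.testBit_two_pow_add_eq, Nat.testBit_lt_two_pow hy,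
        if_neg (by omega : ¬ (2 ^ n + y < 2 ^ n)), Nat.add_sub_cancel_left]
      rw [Finset.prod_congr rfl (fun i hi => by
        rw [Nat.testBit_two_pow_add_gt (Finset.mem_range.1 hi)])]
      simp only [Bool.not_false, if_true]
      ring
    rw [pow_succ, mul_two, Finset.sum_range_add, Finset.sum_congr rfl s1,
      Finset.sum_congr rfl s2, ← Finset.mul_sum, ← Finset.mul_sum, ha', hb', e, eT]
    ring

open Real Finset

/-- The `2^n × 2^n` joint-probability matrix of the distributed-QFT experiment,
`M x y = 2⁻ⁿ ∏_{i=1}^n t_i(x,y)` with `t_i = cos²(π x / 2^{2n-i})` if the `i`-th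
binary digit of `y` is `0` and `sin²(π x / 2^{2n-i})` otherwise, has rank at
least `2^{n-1}` over `ℝ`. -/
theorem statement3 (n : ℕ) (hn : 1 ≤ n) :
    2 ^ (n - 1) ≤
      (Matrix.of (fun x y : Fin (2 ^ n) =>
        (2 ^ n : ℝ)⁻¹ * ∏ i ∈ Finset.range n,
          (if (y : ℕ).testBit i
            then (Real.sin (Real.pi * (x : ℕ) / 2 ^ (2 * n - (i + 1)))) ^ 2
            else (Real.cos (Real.pi * (x : ℕ) / 2 ^ (2 * n - (i + 1)))) ^ 2))).rank := by
  set M := (Matrix.of (fun x y : Fin (2 ^ n) =>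
        (2 ^ n : ℝ)⁻¹ * ∏ i ∈ Finset.range n,
          (if (y : ℕ).testBit i
            then (Real.sin (Real.pi * (x : ℕ) / 2 ^ (2 * n - (i + 1)))) ^ 2
            else (Real.cos (Real.pi * (x : ℕ) / 2 ^ (2 * n - (i + 1)))) ^ 2))) with hM
  let φ : Fin (2 ^ n) → ℝ := fun x => 2 * Real.pi * ((x : ℕ) : ℝ) / 2 ^ (2 * n - 1)
  have hmem : ∀ x, φ x ∈ Set.Icc 0 Real.pi := by
    intro x
    refine ⟨by positivity, ?_⟩
    have hx : 2 * (x : ℕ) ≤ 2 ^ (2 * n - 1) := by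
      have hx := x.2
      obtain ⟨m, rfl⟩ : ∃ m, n = m + 1 := ⟨n - 1, by omega⟩
      rcases m with _ | m
      · simp at hx ⊢; omega
      · have : 2 ^ (2 * (m + 1 + 1) - 1) = 2 ^ (m + 1 + 1) * 2 * 2 ^ m := by
          rw [← pow_succ, ← pow_add]; congr 1; omega
        rw [this]
        have := Nat.one_le_two_pow (n := m)
        nlinarith
    have hx' : 2 * ((x : ℕ) : ℝ) ≤ 2 ^ (2 * n - 1) := by exact_mod_cast hx
    show 2 * Real.pi * ((x : ℕ) : ℝ) / 2 ^ (2 * n - 1) ≤ Real.pi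
    rw [div_le_iff₀ (by positivity)]
    nlinarith [Real.pi_pos]
  have hinj : Function.Injective (fun x => Real.cos (φ x)) := by
    intro x y h
    have h1 := Real.injOn_cos (hmem x) (hmem y) h
    have h2 : 2 * Real.pi * ((x : ℕ) : ℝ) = 2 * Real.pi * ((y : ℕ) : ℝ) :=
      (div_left_inj' (by positivity)).1 h1
    have h3 := mul_left_cancel₀ (by positivity) h2
    exact Fin.ext (by exact_mod_cast h3)
  have hang : ∀ (x : Fin (2 ^ n)) (i : ℕ), i < n →
      2 ^ i * φ x = 2 * (Real.pi * (x : ℕ) / 2 ^ (2 * n - (i + 1))) := by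
    intro x i hi
    have : (2 : ℝ) ^ (2 * n - 1) = 2 ^ (2 * n - (i + 1)) * 2 ^ i := by
      rw [← pow_add]; congr 1; omega
    show 2 ^ i * (2 * Real.pi * ((x : ℕ) : ℝ) / 2 ^ (2 * n - 1)) = _
    rw [this]
    field_simp
  have hsurj : LinearMap.range M.mulVecLin = ⊤ := by
    rw [LinearMap.range_eq_top]
    intro w
    let p := Lagrange.interpolate Finset.univ (fun x => Real.cos (φ x)) w
    have hp : p.degree < ((2 ^ n : ℕ) : WithBot ℕ) := by
      have := Lagrange.degree_interpolate_lt (s := Finset.univ) w (hinj.injOn)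
      rwa [Finset.card_univ, Fintype.card_fin] at this
    obtain ⟨v, hv⟩ := span_aux n p hp
    refine ⟨fun y => 2 ^ n * v y, ?_⟩
    ext x
    have hx := hv (φ x)
    have hw : p.eval (Real.cos (φ x)) = w x :=
      Lagrange.eval_interpolate_at_node (s := Finset.univ) w (hinj.injOn) (Finset.mem_univ x)
    rw [hw, ← Fin.sum_univ_eq_sum_range (fun y => (∏ i ∈ Finset.range n,
      (if y.testBit i then (1 - Real.cos (2 ^ i * φ x)) / 2
        else (1 + Real.cos (2 ^ i * φ x)) / 2)) * v y)] at hx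
    rw [← hx, Matrix.mulVecLin_apply, Matrix.mulVec, dotProduct]
    refine Finset.sum_congr rfl fun y _ => ?_
    have : ∀ i ∈ Finset.range n, (if (y : ℕ).testBit i
            then (Real.sin (Real.pi * (x : ℕ) / 2 ^ (2 * n - (i + 1)))) ^ 2
            else (Real.cos (Real.pi * (x : ℕ) / 2 ^ (2 * n - (i + 1)))) ^ 2) =
        (if (y : ℕ).testBit i then (1 - Real.cos (2 ^ i * φ x)) / 2
        else (1 + Real.cos (2 ^ i * φ x)) / 2) := by
      intro i hi
      rw [hang x i (Finset.mem_range.1 hi), Real.cos_two_mul, Real.sin_sq]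
      split_ifs <;> ring
    rw [hM, Matrix.of_apply, Finset.prod_congr rfl this]
    generalize (∏ i ∈ Finset.range n, _ : ℝ) = P
    field_simp
  rw [Matrix.rank, hsurj, finrank_top]
  simp only [Module.finrank_fintype_fun_eq_card, Fintype.card_fin]
  exact Nat.pow_le_pow_right (by norm_num) (by omega)
end

section
/- Let n ≥ 1 and define the real matrix M' of size 2^n × 2^n, indexed by x, y ∈ {0, 1, …, 2^n − 1}, by M'(x, y) = ∏_{i=1}^{n} (cos(2π x / 2^{2n−i}))^{y_i}, where (y_1, …, y_n) ∈ {0,1}^n are the binary digits of y (with y = Σ_{i=1}^n y_i 2^{i−1}). Then the rank of M' over ℝ is at least 2^{n−1}. -/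
theorem aux_bits (y n : ℕ) :
    ∑ i ∈ Finset.range n, (if y.testBit i then 1 else 0) * 2 ^ i = y % 2 ^ n := by
  induction n with
  | zero => simp [Nat.mod_one]
  | succ k ih =>
    rw [Finset.sum_range_succ, ih, Nat.mod_pow_succ, ← Nat.toNat_testBit]
    cases y.testBit k <;> simp

noncomputable def auxP (n y : ℕ) : Polynomial ℝ :=
  ∏ i ∈ Finset.range n,
    (Polynomial.Chebyshev.T ℝ ((2 ^ i : ℕ) : ℤ)) ^ (if y.testBit i then 1 else 0)

theorem auxP_ne (n y : ℕ) : auxP n y ≠ 0 :=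
  Finset.prod_ne_zero_iff.2 fun _ _ => pow_ne_zero _ (Polynomial.Chebyshev.T_ne_zero ℝ _)

theorem auxP_deg (n y : ℕ) (hy : y < 2 ^ n) : (auxP n y).natDegree = y := by
  unfold auxP
  rw [Polynomial.natDegree_prod _ _
    fun _ _ => pow_ne_zero _ (Polynomial.Chebyshev.T_ne_zero ℝ _)]
  simp only [Polynomial.natDegree_pow, Polynomial.Chebyshev.natDegree_T, Int.natAbs_natCast]
  rw [aux_bits, Nat.mod_eq_of_lt hy]

theorem aux_inj (n : ℕ) (hn : 1 ≤ n) : Function.Injective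
    (fun x : Fin (2 ^ n) => Real.cos (2 * Real.pi * (x : ℕ) / 2 ^ (2 * n - 1))) := by
  have hmem : ∀ x : Fin (2 ^ n),
      2 * Real.pi * (x : ℕ) / 2 ^ (2 * n - 1) ∈ Set.Icc 0 Real.pi := by
    intro x
    have hpi := Real.pi_pos
    refine ⟨by positivity, ?_⟩
    rw [div_le_iff₀ (by positivity)]
    have h1 : ((x : ℕ) : ℝ) + 1 ≤ 2 ^ n := by exact_mod_cast x.2
    have h2 : (2 : ℝ) ^ (2 * n - 1) * 2 = 2 ^ n * 2 ^ n := by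
      rw [← pow_succ, ← pow_add]; congr 1; omega
    have h3 : 2 * ((x : ℕ) : ℝ) ≤ 2 ^ (2 * n - 1) := by
      nlinarith [sq_nonneg ((2 : ℝ) ^ n - 2)]
    nlinarith
  intro x x' h
  have h := Real.injOn_cos (hmem x) (hmem x') h
  have hpi := Real.pi_ne_zero
  field_simp at h
  exact Fin.ext (by exact_mod_cast h)

/-- The `2^n × 2^n` matrix `M' x y = ∏_{i=1}^n cos(2π x / 2^{2n-i})^{y_i}`,
where `y_i` are the binary digits of `y`, has rank at least `2^{n-1}` over `ℝ`. -/
theorem statement4 (n : ℕ) (hn : 1 ≤ n) :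
    2 ^ (n - 1) ≤
      (Matrix.of (fun x y : Fin (2 ^ n) =>
        ∏ i ∈ Finset.range n,
          (Real.cos (2 * Real.pi * (x : ℕ) / 2 ^ (2 * n - (i + 1)))) ^
            (if (y : ℕ).testBit i then 1 else 0))).rank := by
  have hM : (Matrix.of (fun x y : Fin (2 ^ n) =>
        ∏ i ∈ Finset.range n,
          (Real.cos (2 * Real.pi * (x : ℕ) / 2 ^ (2 * n - (i + 1)))) ^
            (if (y : ℕ).testBit i then 1 else 0))) =
      Matrix.of (fun x y : Fin (2 ^ n) => (auxP n y).eval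
        (Real.cos (2 * Real.pi * (x : ℕ) / 2 ^ (2 * n - 1)))) := by
    ext x y
    simp only [Matrix.of_apply, auxP, Polynomial.eval_prod, Polynomial.eval_pow,
      Polynomial.Chebyshev.T_real_cos]
    refine Finset.prod_congr rfl fun i hi => ?_
    have hi := Finset.mem_range.1 hi
    congr 2
    have h2 : (2 : ℝ) ^ (2 * n - 1) = 2 ^ (2 * n - (i + 1)) * 2 ^ i := by
      rw [← pow_add]; congr 1; omega
    rw [h2]
    push_cast
    field_simp
  have hdeg : ∀ y : Fin (2 ^ n), (auxP n y).natDegree = y := fun y => auxP_deg n y y.2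
  rw [hM, Matrix.rank_of_isUnit, Fintype.card_fin]
  · exact Nat.pow_le_pow_right (by norm_num) (by omega)
  rw [Matrix.isUnit_iff_isUnit_det, isUnit_iff_ne_zero,
    Matrix.eval_matrixOfPolynomials_eq_vandermonde_mul_matrixOfPolynomials
      (fun x : Fin (2 ^ n) => Real.cos (2 * Real.pi * (x : ℕ) / 2 ^ (2 * n - 1)))
      (fun y => auxP n y) (fun y => (hdeg y).le), Matrix.det_mul]
  refine mul_ne_zero (Matrix.det_vandermonde_ne_zero_iff.2 (aux_inj n hn)) ?_
  rw [Matrix.det_of_isUpperTriangular (Matrix.matrixOfPolynomials_blockTriangular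
    (fun y : Fin (2 ^ n) => auxP n y) (fun y => (hdeg y).le))]
  refine Finset.prod_ne_zero_iff.2 fun y _ => ?_
  have h := Polynomial.leadingCoeff_ne_zero.2 (auxP_ne n y)
  rw [Polynomial.leadingCoeff, hdeg] at h
  exact h
end

section
/- Let X and Y be finite index types and A a matrix over ℂ indexed by X × Y. Then the real matrix B with entries B(x, y) = |A(x, y)|² (the squared modulus of A(x,y)) satisfies rank_ℝ(B) ≤ (rank_ℂ(A))². -/
theorem exists_rank_fact {X Y : Type*} [Fintype X] [Fintype Y] (A : Matrix X Y ℂ) :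
    ∃ (U : X → Fin A.rank → ℂ) (V : Fin A.rank → Y → ℂ), ∀ x y, A x y = ∑ i, U x i * V i y := by
  classical
  let b : Module.Basis (Fin A.rank) ℂ (LinearMap.range A.mulVecLin) :=
    Module.finBasisOfFinrankEq ℂ _ rfl
  let c : Y → LinearMap.range A.mulVecLin := fun y => ⟨A.mulVecLin (Pi.single y 1), ⟨_, rfl⟩⟩
  refine ⟨fun x i => (b i : X → ℂ) x, fun i y => b.repr (c y) i, fun x y => ?_⟩
  have h := congrArg (fun v : LinearMap.range A.mulVecLin => (v : X → ℂ) x) (b.sum_repr (c y))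
  have hc : ((c y : LinearMap.range A.mulVecLin) : X → ℂ) x = A x y := by
    simp [c]
  rw [← hc]
  refine h.symm.trans ?_
  simp only [Submodule.coe_sum, Submodule.coe_smul, Finset.sum_apply, Pi.smul_apply, smul_eq_mul]
  exact Finset.sum_congr rfl fun i _ => mul_comm _ _

/-- For a complex matrix `A`, the real matrix of squared moduli
`B x y = |A x y|²` satisfies `rank_ℝ B ≤ (rank_ℂ A)²`. -/
theorem statement8 {X Y : Type*} [Fintype X] [Fintype Y] (A : Matrix X Y ℂ) :
    (Matrix.of (fun x y => Complex.normSq (A x y)) : Matrix X Y ℝ).rank ≤ A.rank ^ 2 := by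
  obtain ⟨U, V, h⟩ := exists_rank_fact A
  let a : X → Fin A.rank → Fin A.rank → ℂ := fun x i j => U x i * star (U x j)
  let b : Y → Fin A.rank → Fin A.rank → ℂ := fun y i j => V i y * star (V j y)
  let P : Matrix X (Fin A.rank × Fin A.rank) ℝ :=
    Matrix.of fun x p => (a x p.1 p.2).re + (a x p.1 p.2).im
  let Q : Matrix (Fin A.rank × Fin A.rank) Y ℝ :=
    Matrix.of fun p y => (b y p.1 p.2).re - (b y p.1 p.2).im
  have key : (Matrix.of (fun x y => Complex.normSq (A x y)) : Matrix X Y ℝ) = P * Q := by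
    ext x y
    have h1 : Complex.normSq (A x y) = ∑ i, ∑ j, (a x i j * b y i j).re := by
      have : ((Complex.normSq (A x y) : ℝ) : ℂ) = ∑ i, ∑ j, a x i j * b y i j := by
        rw [Complex.normSq_eq_conj_mul_self, mul_comm, h, map_sum, Finset.sum_mul_sum]
        refine Finset.sum_congr rfl fun i _ => Finset.sum_congr rfl fun j _ => ?_
        simp [a, b]
        ring
      have := congrArg Complex.re this
      simpa only [Complex.ofReal_re, Complex.re_sum] using this
    have h2 : ∑ i, ∑ j, ((a x i j).im * (b y i j).re - (a x i j).re * (b y i j).im) = 0 := by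
      have h3 : ∑ i, ∑ j, ((a x i j).im * (b y i j).re - (a x i j).re * (b y i j).im)
          = - ∑ i, ∑ j, ((a x i j).im * (b y i j).re - (a x i j).re * (b y i j).im) := by
        conv_lhs => rw [Finset.sum_comm]
        simp only [← Finset.sum_neg_distrib]
        refine Finset.sum_congr rfl fun i _ => Finset.sum_congr rfl fun j _ => ?_
        simp [a, b]
        ring
      linarith
    rw [Matrix.of_apply, h1, Matrix.mul_apply, Fintype.sum_prod_type, ← add_zero (∑ i, _), ← h2]
    simp only [← Finset.sum_add_distrib]
    refine Finset.sum_congr rfl fun i _ => Finset.sum_congr rfl fun j _ => ?_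
    simp only [P, Q, Matrix.of_apply, Complex.mul_re]
    ring
  rw [key]
  calc (P * Q).rank ≤ P.rank := Matrix.rank_mul_le_left _ _
    _ ≤ _ := P.rank_le_card_width
    _ = _ := by simp [sq]
end

section
/- Let X and Y be finite types, R ∈ ℕ, and suppose ψ : X × Y → ℂ admits a decomposition ψ(x, y) = Σ_{i=1}^{R} α_i · u_i(x) · v_i(y) for some complex coefficients α_i and functions u_i : X → ℂ, v_i : Y → ℂ. Then the real matrix M with entries M(x, y) = |ψ(x, y)|² has rank at most R² over ℝ. -/
/-- If `ψ (x, y) = ∑_{i=1}^R α_i · u_i x · v_i y` (a Schmidt-rank-`R`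
decomposition), then the real matrix `M x y = |ψ (x, y)|²` has rank at most `R²`. -/
theorem statement9 {X Y : Type*} [Fintype X] [Fintype Y] (R : ℕ) (ψ : X × Y → ℂ)
    (α : Fin R → ℂ) (u : Fin R → X → ℂ) (v : Fin R → Y → ℂ)
    (hψ : ∀ x y, ψ (x, y) = ∑ i : Fin R, α i * u i x * v i y) :
    (Matrix.of (fun x y => Complex.normSq (ψ (x, y))) : Matrix X Y ℝ).rank ≤ R ^ 2 := by
  let w : Fin R → X → ℂ := fun i x => α i * u i x
  let a : X → Fin R × Fin R → ℂ := fun x p => w p.1 x * (starRingEnd ℂ) (w p.2 x)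
  let b : Y → Fin R × Fin R → ℂ := fun y p => v p.1 y * (starRingEnd ℂ) (v p.2 y)
  let A : Matrix X (Fin R × Fin R) ℝ := Matrix.of fun x p => (a x p).re + (a x p).im
  let B : Matrix (Fin R × Fin R) Y ℝ := Matrix.of fun p y => (b y p).re - (b y p).im
  have key : (Matrix.of (fun x y => Complex.normSq (ψ (x, y))) : Matrix X Y ℝ) = A * B := by
    ext x y
    have h1 : Complex.normSq (ψ (x, y)) = ∑ i, ∑ j, (a x (i, j) * b y (i, j)).re := by
      have : ((Complex.normSq (ψ (x, y)) : ℝ) : ℂ) = ∑ i, ∑ j, a x (i, j) * b y (i, j) := by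
        rw [← Complex.mul_conj, hψ, map_sum, Finset.sum_mul_sum]
        refine Finset.sum_congr rfl fun i _ => Finset.sum_congr rfl fun j _ => ?_
        simp only [a, b, w, map_mul]
        ring
      have h := congrArg Complex.re this
      simpa only [Complex.ofReal_re, Complex.re_sum] using h
    have h2 : ∑ i, ∑ j, ((a x (i, j)).im * (b y (i, j)).re - (a x (i, j)).re * (b y (i, j)).im)
        = 0 := by
      have hs : ∑ i, ∑ j, ((a x (i, j)).im * (b y (i, j)).re - (a x (i, j)).re * (b y (i, j)).im)
        = -∑ i, ∑ j, ((a x (i, j)).im * (b y (i, j)).re - (a x (i, j)).re * (b y (i, j)).im) := by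
        conv_lhs => rw [Finset.sum_comm]
        simp only [← Finset.sum_neg_distrib]
        refine Finset.sum_congr rfl fun i _ => Finset.sum_congr rfl fun j _ => ?_
        simp only [a, b, Complex.mul_re, Complex.mul_im, Complex.conj_re, Complex.conj_im]
        ring
      linarith
    rw [Matrix.of_apply, h1, Matrix.mul_apply, Fintype.sum_prod_type, ← add_zero (∑ i, ∑ j, _),
      ← h2]
    simp only [← Finset.sum_add_distrib]
    refine Finset.sum_congr rfl fun i _ => Finset.sum_congr rfl fun j _ => ?_
    simp only [A, B, Matrix.of_apply, Complex.mul_re]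
    ring
  rw [key]
  refine (Matrix.rank_mul_le_left A B).trans ((Matrix.rank_le_card_width A).trans ?_)
  simp [sq]
end
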